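/- Fix integers ℓ≥1 and n≥0. Then, as an identity of polynomials in q and x, Σ_{σ ∈ G_{ℓ,n}} q^{fmaj σ} x^{fix σ} = g_{ℓ,n}(q,x), and likewise Σ_{σ ∈ G_{ℓ,n}} q^{fmaf σ} x^{fix σ} = g_{ℓ,n}(q,x), where g_{ℓ,n}(q,x) = [ℓ]_q[2ℓ]_q⋯[nℓ]_q · Σ_{k=0}^n (x−1)(x−q^ℓ)⋯(x−q^{ℓ(k−1)}) / ([ℓ]_q[2ℓ]_q⋯[kℓ]_q) = Σ_{k=0}^n (x−1)(x−q^ℓ)⋯(x−q^{ℓ(k−1)}) · [(k+1)ℓ]_q[(k+2)ℓ]_q⋯[nℓ]_q. -/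

import Mathlib

/-!
It suffices to evaluate at real `0 < q < 1` and `x`. Write `Q = q^ℓ` and
`(Q)_n = (1 - Q) ⋯ (1 - Q^n)`.

*Words.* A coloured permutation `σ` and a sequence of gaps `a` in `ℕ^n` encode a word `F` of
length `n` over `ℕ`: take the weakly decreasing `f` with `f_i - f_{i+1} = a_i + [i is a descent]`
and put `F (σ i) = ℓ f_i + c_i`, with `c_i` the colour at `i`. This is a bijection onto all words,
the letters of `F` sum to `fmaj σ + ∑ ℓ (j + 1) a_j`, with `j` counted from `0`, and the fixed
points of `σ` are the positions that the stable decreasing sort of `F` leaves in place and whose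
letter is divisible by `ℓ`. So, with weight `q^(sum of letters)`, words with `k` fixed points have
generating function `A_{n,k} / (Q)_n`, where `A_{n,k}` is the generating function of `fmaj` over
coloured permutations with `k` fixed points; all words together give `(1 - q)^{-n}`.

*Inserting fixed points.* Each letter can be inserted into a word as a fixed point, with a unique
resulting word, and this does not affect the other fixed points. Hence a word with `k` fixed points
amounts to a word without fixed points and a partition into `k` parts, that is,
`A_{m+k,k} / (Q)_{m+k} = A_{m,0} / (Q)_m · 1 / (Q)_k`.

*The distribution of `fmaj`.* With `D(u) = ∑ A_{m,0} u^m / (Q)_m` and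
`E_x(u) = ∑ x^k u^k / (Q)_k`, the generating function sought is `(Q)_n` times the coefficient of
`u^n` in `D E_x`. The case `x = 1` gives `D E_1 = 1 / (1 - u/(1 - q))`, and the q-binomial theorem
gives `E_x = P E_1` with `P(u) = ∑ (x - 1) ⋯ (x - Q^{k-1}) u^k / (Q)_k`. Hence
`D E_x = P / (1 - u/(1 - q))`, whose coefficients are those of `g`.

*The distribution of `fmaf`.* Coloured permutations with fixed point set `S` of size `k` correspond
to fixed-point-free ones on `m = n - k` letters, and `fmaf` exceeds `fmaj` of the latter by
`ℓ (∑ S - k(k-1)/2)`. Since the sum of `Q^(∑ S - k(k-1)/2)` over `S` is a q-binomial coefficient,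
the factorisation of `A_{m+k,k}` shows that `fmaf` and `fmaj` have the same distribution for each
number of fixed points.
-/

open Finset

/-- A colored permutation in `G_{ℓ,n} ≅ C_ℓ ≀ S_n`: an underlying permutation of `Fin n`
together with a color (exponent of `ζ`) attached to each position. The letter at (0-based)
position `i` of the word of `σ` is `ζ^(σ.2 i) · (σ.1 i + 1)` (1-based value `σ.1 i + 1`). -/
abbrev CP (ℓ n : ℕ) := Equiv.Perm (Fin n) × (Fin n → Fin ℓ)

namespace CP

variable {ℓ n : ℕ}

/-- `gtLetter a b` : the letter `a = (colorIndex, value)` is greater than `b` in the order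
`1 > ζ > ⋯ > ζ^{ℓ-1}` on colors, colors compared first. -/
def gtLetter (a b : ℕ × ℕ) : Prop := a.1 < b.1 ∨ (a.1 = b.1 ∧ b.2 < a.2)

instance (a b : ℕ × ℕ) : Decidable (gtLetter a b) := by unfold gtLetter; infer_instance

/-- The letter (color index, 0-based absolute value) at 0-based position `i`. -/
def letter (σ : CP ℓ n) (i : ℕ) : ℕ × ℕ :=
  if h : i < n then ((σ.2 ⟨i, h⟩ : ℕ), (σ.1 ⟨i, h⟩ : ℕ)) else (0, 0)

/-- 0-based descent positions : `i < n-1` such that `x_{i+1} > x_{i+2}` (1-based positions). -/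
def desSet (σ : CP ℓ n) : Finset ℕ :=
  (range (n - 1)).filter fun i => gtLetter (letter σ i) (letter σ (i + 1))

/-- Major index: sum of the (1-based) descent places. -/
def maj (σ : CP ℓ n) : ℕ := ∑ i ∈ desSet σ, (i + 1)

/-- Number of descents. -/
def des (σ : CP ℓ n) : ℕ := (desSet σ).card

/-- `col σ = Σ_j j·#{i : ε_{x_i} = ζ^j}`. -/
def col (σ : CP ℓ n) : ℕ := ∑ i, (σ.2 i : ℕ)

/-- flag major index. -/
def fmaj (σ : CP ℓ n) : ℕ := ℓ * maj σ + col σ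

/-- The set of fixed points (position fixed and color `ζ^0 = 1`). -/
def fixSet (σ : CP ℓ n) : Finset (Fin n) :=
  univ.filter fun i => σ.1 i = i ∧ (σ.2 i : ℕ) = 0

def fix (σ : CP ℓ n) : ℕ := (fixSet σ).card

/-- Number of excedances `x_i > i`. -/
def exc (σ : CP ℓ n) : ℕ :=
  (univ.filter fun i : Fin n => (σ.2 i : ℕ) = 0 ∧ (i : ℕ) < (σ.1 i : ℕ)).card

lemma card_nonfix (σ : CP ℓ n) : ((fixSet σ)ᶜ).card = n - fix σ := by
  rw [Finset.card_compl, fix, Fintype.card_fin]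

lemma card_vals (σ : CP ℓ n) : (((fixSet σ)ᶜ).image σ.1).card = n - fix σ := by
  rw [Finset.card_image_of_injective _ σ.1.injective, card_nonfix]

/-- The bijection from nonfixed positions to the set of their values. -/
def derMid (σ : CP ℓ n) :
    {x // x ∈ ((fixSet σ)ᶜ : Finset (Fin n))} ≃ {x // x ∈ ((fixSet σ)ᶜ).image σ.1} where
  toFun p := ⟨σ.1 p.1, Finset.mem_image_of_mem _ p.2⟩
  invFun v := ⟨σ.1.symm v.1, by
    obtain ⟨p, hp, hpv⟩ := Finset.mem_image.mp v.2
    simpa [← hpv] using hp⟩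
  left_inv p := by simp
  right_inv v := by simp

/-- The derangement part `Der σ`: delete the fixed points of the word of `σ`, replace each
absolute value by its rank among the remaining values, and keep the colors. -/
def Der (σ : CP ℓ n) : CP ℓ (n - fix σ) :=
  let eP := ((fixSet σ)ᶜ).orderIsoOfFin (card_nonfix σ)
  let eV := (((fixSet σ)ᶜ).image σ.1).orderIsoOfFin (card_vals σ)
  (eP.toEquiv.trans ((derMid σ).trans eV.toEquiv.symm), fun i => σ.2 (eP i))

/-- `maf σ = maj (Der σ) + Σ_{j=1}^k (i_j − j)` over the (1-based) fixed points
`i_1 < ⋯ < i_k`; with 0-based fixed positions this is `Σ f − k(k−1)/2`. -/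
def maf (σ : CP ℓ n) : ℕ := maj (Der σ) + ((∑ i ∈ fixSet σ, (i : ℕ)) - (fix σ).choose 2)

/-- flag maf. -/
def fmaf (σ : CP ℓ n) : ℕ := ℓ * maf σ + col σ

end CP

/-- The q-integer `[k]_q = 1 + q + ⋯ + q^{k-1}`. -/
def qint {R : Type*} [CommSemiring R] (q : R) (k : ℕ) : R := ∑ i ∈ range k, q ^ i

open MvPolynomial in
/-- `g_{ℓ,n}(q,x) = Σ_{k=0}^n (x−1)(x−q^ℓ)⋯(x−q^{ℓ(k−1)}) · [(k+1)ℓ]_q ⋯ [nℓ]_q`,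
as a polynomial in `q = X 0` and `x = X 1`. -/
noncomputable def gPoly (ℓ n : ℕ) : MvPolynomial (Fin 2) ℤ :=
  ∑ k ∈ range (n + 1),
    (∏ i ∈ range k, (X 1 - (X 0 : MvPolynomial (Fin 2) ℤ) ^ (ℓ * i))) *
      ∏ j ∈ Icc (k + 1) n, qint (X 0 : MvPolynomial (Fin 2) ℤ) (j * ℓ)

/-! ### Sorting words -/

namespace ColoredWord

variable {α : Type*} {n : ℕ}

/-- The key by which the positions of the word `F` are sorted: by decreasing letter, ties being
broken by increasing position. Positions are numbers, so that a key can also name a gap of `F`. -/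
def sortKey (F : Fin n → α) (p : Fin n) : αᵒᵈ ×ₗ ℕ := toLex (OrderDual.toDual (F p), (p : ℕ))

lemma sortKey_injective (F : Fin n → α) : Function.Injective (sortKey F) := fun _ _ h =>
  Fin.ext (congrArg (fun k => (ofLex k).2) h)

lemma removeNth_eq_of_const {p p' : Fin (n + 1)} (hpp' : p ≤ p') {v : α} {F : Fin (n + 1) → α}
    (hF : ∀ w, p ≤ w → w ≤ p' → F w = v) : p.removeNth F = p'.removeNth F := by
  funext w
  rcases lt_or_ge w.castSucc p with hw | hw
  · simp [Fin.removeNth, Fin.succAbove_of_castSucc_lt, hw, hw.trans_le hpp']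
  rcases lt_or_ge w.castSucc p' with hw' | hw'
  · rw [Fin.removeNth, Fin.removeNth, Fin.succAbove_of_le_castSucc p w hw,
      Fin.succAbove_of_castSucc_lt p' w hw', hF _ hw hw'.le,
      hF _ (hw.trans w.castSucc_lt_succ.le) (Fin.castSucc_lt_iff_succ_le.mp hw')]
  · simp [Fin.removeNth, Fin.succAbove_of_le_castSucc, hw, hw']

variable [LinearOrder α]

/-- The number of letters of `F` that sorting puts before a letter `v` inserted just before
position `p`. -/
def sortRank (F : Fin n → α) (v : α) (p : ℕ) : ℕ :=
  #{u | sortKey F u < toLex (OrderDual.toDual v, p)}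

/-- The position to which sorting moves position `p` of the word `F`. -/
def sortIndex (F : Fin n → α) (p : Fin n) : ℕ := sortRank F (F p) p

lemma sortKey_lt_iff {F : Fin n → α} {u : Fin n} {v : α} {p : ℕ} :
    sortKey F u < toLex (OrderDual.toDual v, p) ↔ v < F u ∨ F u = v ∧ (u : ℕ) < p := by
  simp [sortKey, Prod.Lex.lt_iff]

lemma exists_strictMono_sortKey (F : Fin n → α) :
    ∃ s : Equiv.Perm (Fin n), StrictMono (sortKey F ∘ s) :=
  ⟨Tuple.sort (sortKey F), (Tuple.monotone_sort _).strictMono_of_injective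
    ((sortKey_injective F).comp (Equiv.injective _))⟩

lemma sortIndex_apply_of_strictMono {F : Fin n → α} {s : Equiv.Perm (Fin n)}
    (hs : StrictMono (sortKey F ∘ s)) (i : Fin n) : sortIndex F (s i) = i := by
  have h : ({u | sortKey F u < sortKey F (s i)} : Finset (Fin n)) = (Iio i).map s.toEmbedding := by
    ext u
    obtain ⟨j, rfl⟩ := s.surjective u
    simpa using hs.lt_iff_lt (a := j) (b := i)
  rw [← Fin.card_Iio i, ← card_map s.toEmbedding, ← h]
  rfl

lemma sortIndex_lt_sortIndex_iff {F : Fin n → α} {u w : Fin n} :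
    sortIndex F u < sortIndex F w ↔ sortKey F u < sortKey F w := by
  obtain ⟨s, hs⟩ := exists_strictMono_sortKey F
  obtain ⟨i, rfl⟩ := s.surjective u
  obtain ⟨j, rfl⟩ := s.surjective w
  rw [sortIndex_apply_of_strictMono hs, sortIndex_apply_of_strictMono hs]
  exact hs.lt_iff_lt.symm

lemma sortIndex_injective (F : Fin n → α) : Function.Injective (sortIndex F) := by
  obtain ⟨s, hs⟩ := exists_strictMono_sortKey F
  intro u w h
  obtain ⟨i, rfl⟩ := s.surjective u
  obtain ⟨j, rfl⟩ := s.surjective w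
  rw [sortIndex_apply_of_strictMono hs, sortIndex_apply_of_strictMono hs] at h
  rw [Fin.ext h]

lemma sortRank_le_length (F : Fin n → α) (v : α) (p : ℕ) : sortRank F v p ≤ n :=
  (card_le_univ _).trans_eq (Fintype.card_fin n)

lemma sortRank_mono (F : Fin n → α) (v : α) : Monotone (sortRank F v) := fun p p' h =>
  card_le_card fun u => by
    simp only [mem_filter, mem_univ, true_and, sortKey_lt_iff]
    exact Or.imp_right fun hu => ⟨hu.1, hu.2.trans_le h⟩

lemma sortRank_succ (F : Fin n → α) (v : α) (p : ℕ) :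
    sortRank F v (p + 1) = sortRank F v p + #{u : Fin n | (u : ℕ) = p ∧ F u = v} := by
  rw [sortRank, sortRank, ← card_union_of_disjoint, ← filter_or]
  · congr! 2 with u
    rw [sortKey_lt_iff, sortKey_lt_iff]
    grind
  · refine disjoint_filter.mpr fun u _ hu => ?_
    rw [sortKey_lt_iff] at hu
    grind

lemma sortRank_add_le (F : Fin n → α) (v : α) (p d : ℕ) :
    sortRank F v (p + d) ≤ sortRank F v p + d := by
  induction d with
  | zero => rfl
  | succ d ih =>
    have hone : #{u : Fin n | (u : ℕ) = p + d ∧ F u = v} ≤ 1 := card_le_one.mpr <| by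
      simp only [mem_filter, mem_univ, true_and]
      omega
    rw [← add_assoc, sortRank_succ]
    omega

/-- Passing one more letter raises `sortRank F v` by one if that letter is `v` and by zero
otherwise, so between two fixed points of `sortRank F v` it must always rise. -/
lemma eq_of_sortRank_eq {F : Fin n → α} {v : α} {p p' : ℕ} (hp : sortRank F v p = p)
    (hp' : sortRank F v p' = p') {w : Fin n} (hpw : p ≤ w) (hwp' : (w : ℕ) < p') : F w = v := by
  have hlow := sortRank_add_le F v p (w - p)
  have hhigh := sortRank_add_le F v (w + 1) (p' - (w + 1))
  rw [Nat.add_sub_cancel' hpw] at hlow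
  rw [Nat.add_sub_cancel' hwp', sortRank_succ] at hhigh
  obtain ⟨u, hu⟩ : ({u | (u : ℕ) = w ∧ F u = v} : Finset (Fin n)).Nonempty :=
    card_pos.mp (by omega)
  obtain ⟨huw, huv⟩ : (u : ℕ) = w ∧ F u = v := by simpa using hu
  rwa [Fin.ext huw] at huv

lemma exists_sortRank_eq (F : Fin n → α) (v : α) : ∃ p ≤ n, sortRank F v p = p := by
  have hex : ∃ p, sortRank F v p ≤ p := ⟨n, sortRank_le_length F v n⟩
  refine ⟨Nat.find hex, Nat.find_min' hex (sortRank_le_length F v n),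
    (Nat.find_spec hex).antisymm ?_⟩
  rcases hr : Nat.find hex with _ | r
  · exact Nat.zero_le _
  · have hlt : r < sortRank F v r := not_le.mp (Nat.find_min hex (by omega))
    exact hlt.trans_le (sortRank_mono F v (Nat.le_succ r))

/-! ### Inserting fixed points into words -/

lemma sortIndex_eq_sortRank_removeNth (F : Fin (n + 1) → α) (p : Fin (n + 1)) :
    sortIndex F p = sortRank (p.removeNth F) (F p) p := by
  have hlt : ∀ u : Fin n, ((p.succAbove u : Fin (n + 1)) : ℕ) < p ↔ (u : ℕ) < p := fun u =>
    Fin.succAbove_lt_iff_castSucc_lt p u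
  simp only [sortIndex, sortRank, sortKey_lt_iff, card_filter, Fin.sum_univ_succAbove _ p, hlt,
    lt_irrefl, and_false, or_false, if_false, zero_add, Fin.removeNth]

lemma sortIndex_succAbove (F : Fin (n + 1) → α) (p : Fin (n + 1)) (w : Fin n) :
    sortIndex F (p.succAbove w) = sortIndex (p.removeNth F) w +
      if sortIndex F p < sortIndex F (p.succAbove w) then 1 else 0 := by
  have hkey : sortIndex F p < sortIndex F (p.succAbove w) ↔
      F (p.succAbove w) < F p ∨ F p = F (p.succAbove w) ∧ p < p.succAbove w :=
    sortIndex_lt_sortIndex_iff.trans sortKey_lt_iff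
  rw [if_congr hkey rfl rfl, sortIndex, sortRank, card_filter, Fin.sum_univ_succAbove _ p,
    add_comm, sortIndex, sortRank, card_filter]
  simp only [sortKey_lt_iff, Fin.removeNth, Fin.val_fin_lt, Fin.succAbove_lt_succAbove_iff]

/-- The fixed points of the word `F`: the positions that sorting leaves in place and whose letter
satisfies `P`. For the word of a coloured permutation, `P` expresses that the colour is trivial. -/
def fixedPoints (P : α → Prop) [DecidablePred P] (F : Fin n → α) : Finset (Fin n) :=
  {p | sortIndex F p = p ∧ P (F p)}

variable {P : α → Prop} [DecidablePred P]

lemma mem_fixedPoints {F : Fin n → α} {p : Fin n} :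
    p ∈ fixedPoints P F ↔ sortIndex F p = p ∧ P (F p) := by
  simp [fixedPoints]

lemma succAbove_mem_fixedPoints {F : Fin (n + 1) → α} {p : Fin (n + 1)} (hp : sortIndex F p = p)
    {w : Fin n} : p.succAbove w ∈ fixedPoints P F ↔ w ∈ fixedPoints P (p.removeNth F) := by
  have hindex := sortIndex_succAbove F p w
  have hne : sortIndex F (p.succAbove w) ≠ sortIndex F p :=
    (sortIndex_injective F).ne (Fin.succAbove_ne p w)
  have hval : ((p.succAbove w : Fin (n + 1)) : ℕ) = w + if (p : ℕ) ≤ w then 1 else 0 := by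
    rcases lt_or_ge w.castSucc p with hw | hw
    · rw [Fin.succAbove_of_castSucc_lt p w hw, if_neg (show ¬(p : ℕ) ≤ w from not_le.mpr hw)]
      rfl
    · rw [Fin.succAbove_of_le_castSucc p w hw, if_pos (show (p : ℕ) ≤ w from hw)]
      rfl
  rw [hp] at hindex hne
  rw [mem_fixedPoints, mem_fixedPoints]
  refine and_congr_left' ?_
  split_ifs at hindex hval <;> omega

lemma fixedPoints_eq_insert {F : Fin (n + 1) → α} {p : Fin (n + 1)} (hp : p ∈ fixedPoints P F) :
    fixedPoints P F = insert p ((fixedPoints P (p.removeNth F)).map p.succAboveEmb) := by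
  ext w
  rcases Fin.eq_self_or_eq_succAbove p w with rfl | ⟨w, rfl⟩
  · simp [hp]
  · simp [succAbove_mem_fixedPoints (mem_fixedPoints.mp hp).1, Fin.succAbove_ne]

lemma card_fixedPoints_removeNth {F : Fin (n + 1) → α} {p : Fin (n + 1)}
    (hp : p ∈ fixedPoints P F) :
    #(fixedPoints P F) = #(fixedPoints P (p.removeNth F)) + 1 := by
  rw [fixedPoints_eq_insert hp, card_insert_of_notMem (by simp [Fin.succAbove_ne]), card_map]

lemma eq_of_between {F : Fin (n + 1) → α} {p p' : Fin (n + 1)} (hp : sortIndex F p = p)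
    (hp' : sortIndex F p' = p') (h : F p = F p') {w : Fin (n + 1)} (hpw : p ≤ w) (hwp' : w ≤ p') :
    F w = F p := by
  rcases hwp'.eq_or_lt with rfl | hwp'
  · exact h.symm
  · rw [sortIndex, ← h] at hp'
    exact eq_of_sortRank_eq hp hp' hpw hwp'

lemma removeNth_eq_of_sortIndex_eq {F : Fin (n + 1) → α} {p p' : Fin (n + 1)}
    (hp : sortIndex F p = p) (hp' : sortIndex F p' = p') (h : F p = F p') :
    p.removeNth F = p'.removeNth F := by
  wlog hpp' : p ≤ p' generalizing p p'
  · exact (this hp' hp h.symm (le_of_not_ge hpp')).symm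
  exact removeNth_eq_of_const hpp' fun _ => eq_of_between hp hp' h

/-- A letter can be inserted into a word as a fixed point in only one way, up to the resulting
word: any two admissible positions are separated by copies of that letter. -/
lemma eq_of_removeNth_eq {F F' : Fin (n + 1) → α} {p p' : Fin (n + 1)} (hp : sortIndex F p = p)
    (hp' : sortIndex F' p' = p') (hval : F p = F' p') (hrem : p.removeNth F = p'.removeNth F') :
    F = F' := by
  wlog hpp' : p ≤ p' generalizing F F' p p'
  · exact (this hp' hp hval.symm hrem.symm (le_of_not_ge hpp')).symm
  rw [sortIndex_eq_sortRank_removeNth] at hp hp'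
  rw [← hrem, ← hval] at hp'
  have hconst : ∀ w, p ≤ w → w ≤ p' → F w = F p := by
    intro w hpw hwp'
    rcases Fin.eq_self_or_eq_succAbove p w with rfl | ⟨u, rfl⟩
    · rfl
    · have hpu : p ≤ u.castSucc := by
        by_contra! hlt
        rw [Fin.succAbove_of_castSucc_lt p u hlt] at hpw
        exact hpw.not_gt hlt
      rw [Fin.succAbove_of_le_castSucc p u hpu] at hwp'
      exact eq_of_sortRank_eq hp hp' hpu hwp'
  have hF' : F p' = F' p' := (hconst p' hpp' le_rfl).trans hval
  rw [← Fin.insertNth_self_removeNth p' F, ← Fin.insertNth_self_removeNth p' F', hF', ← hrem,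
    removeNth_eq_of_const hpp' hconst]

lemma exists_insert (v : α) (W : Fin n → α) :
    ∃ F : Fin (n + 1) → α, ∃ p, sortIndex F p = p ∧ F p = v ∧ p.removeNth F = W := by
  obtain ⟨p, hpn, hp⟩ := exists_sortRank_eq W v
  refine ⟨Fin.insertNth ⟨p, by omega⟩ v W, ⟨p, by omega⟩, ?_, by simp, by simp⟩
  rw [sortIndex_eq_sortRank_removeNth]
  simpa using hp

/-- The word obtained from `W` by inserting the letter `v` where sorting leaves it in place. -/
noncomputable def insertFixed (v : α) (W : Fin n → α) : Fin (n + 1) → α :=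
  (exists_insert v W).choose

lemma insertFixed_spec (v : α) (W : Fin n → α) :
    ∃ p, sortIndex (insertFixed v W) p = p ∧ insertFixed v W p = v ∧
      p.removeNth (insertFixed v W) = W :=
  (exists_insert v W).choose_spec

lemma insertFixed_removeNth {F : Fin (n + 1) → α} {p : Fin (n + 1)} (hp : sortIndex F p = p) :
    insertFixed (F p) (p.removeNth F) = F := by
  obtain ⟨r, hr, hval, hrem⟩ := insertFixed_spec (F p) (p.removeNth F)
  exact eq_of_removeNth_eq hr hp hval hrem

lemma sum_insertFixed (v : ℕ) (W : Fin n → ℕ) : ∑ i, insertFixed v W i = v + ∑ i, W i := by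
  obtain ⟨p, -, hval, hrem⟩ := insertFixed_spec v W
  rw [Fin.sum_univ_succAbove _ p, hval]
  exact congrArg (fun G : Fin n → ℕ => v + ∑ i, G i) hrem

/-- The words of length `n` with exactly `k` fixed points, all of them carrying letters that are
at least `m`. -/
def wordsWithFixed (P : α → Prop) [DecidablePred P] (n k : ℕ) (m : α) : Set (Fin n → α) :=
  {F | #(fixedPoints P F) = k ∧ ∀ p ∈ fixedPoints P F, m ≤ F p}

lemma insertFixed_mem {k : ℕ} {v : α} (hv : P v) {W : Fin n → α}
    (hW : W ∈ wordsWithFixed P n k v) : insertFixed v W ∈ wordsWithFixed P (n + 1) (k + 1) v := by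
  obtain ⟨p, hp, hval, hrem⟩ := insertFixed_spec v W
  have hmem : p ∈ fixedPoints P (insertFixed v W) := mem_fixedPoints.mpr ⟨hp, by rwa [hval]⟩
  refine ⟨by rw [card_fixedPoints_removeNth hmem, hrem, hW.1], fun r hr => ?_⟩
  rcases Fin.eq_self_or_eq_succAbove p r with rfl | ⟨w, rfl⟩
  · exact hval.ge
  · rw [succAbove_mem_fixedPoints hp, hrem] at hr
    exact (hW.2 w hr).trans_eq (congrFun hrem w).symm

lemma insertFixed_inj {k : ℕ} {v v' : α} (hv : P v) (hv' : P v') {W W' : Fin n → α}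
    (hW : W ∈ wordsWithFixed P n k v) (hW' : W' ∈ wordsWithFixed P n k v')
    (h : insertFixed v W = insertFixed v' W') : v = v' ∧ W = W' := by
  obtain ⟨p, hp, hval, hrem⟩ := insertFixed_spec v W
  obtain ⟨p', hp', hval', hrem'⟩ := insertFixed_spec v' W'
  have hle := (insertFixed_mem hv hW).2
  have hle' := (insertFixed_mem hv' hW').2
  rw [← h] at hp' hval' hrem' hle'
  have hle_v' : v ≤ v' := (hle p' (mem_fixedPoints.mpr ⟨hp', by rwa [hval']⟩)).trans_eq hval'
  have hle_v : v' ≤ v := (hle' p (mem_fixedPoints.mpr ⟨hp, by rwa [hval]⟩)).trans_eq hval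
  have hvv' : v = v' := hle_v'.antisymm hle_v
  refine ⟨hvv', ?_⟩
  rw [← hrem, ← hrem', removeNth_eq_of_sortIndex_eq hp hp' (by rw [hval, hval', hvv'])]

lemma exists_insertFixed_eq {k : ℕ} {m : α} {F : Fin (n + 1) → α}
    (hF : F ∈ wordsWithFixed P (n + 1) (k + 1) m) :
    ∃ v, (P v ∧ m ≤ v) ∧ ∃ W ∈ wordsWithFixed P n k v, insertFixed v W = F := by
  obtain ⟨p, hp, hmin⟩ := exists_min_image (fixedPoints P F) F (card_pos.mp (by rw [hF.1]; omega))
  have hfix := (mem_fixedPoints.mp hp).1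
  refine ⟨F p, ⟨(mem_fixedPoints.mp hp).2, hF.2 p hp⟩, p.removeNth F, ⟨?_, fun w hw => ?_⟩,
    insertFixed_removeNth hfix⟩
  · have hcard := card_fixedPoints_removeNth hp
    rw [hF.1] at hcard
    omega
  · exact hmin _ ((succAbove_mem_fixedPoints hfix).mpr hw)

/-- Inserting a smallest fixed letter; the inverse deletes the smallest letter carried by a fixed
point. -/
noncomputable def insertFixedEquiv (P : α → Prop) [DecidablePred P] (n k : ℕ) (m : α) :
    (Σ v : {v // P v ∧ m ≤ v}, wordsWithFixed P n k (v : α)) ≃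
      wordsWithFixed P (n + 1) (k + 1) m :=
  Equiv.ofBijective
    (fun x => ⟨insertFixed x.1 x.2, (insertFixed_mem x.1.2.1 x.2.2).1,
      fun p hp => x.1.2.2.trans ((insertFixed_mem x.1.2.1 x.2.2).2 p hp)⟩) <| by
    constructor
    · rintro ⟨⟨v, hv⟩, W, hW⟩ ⟨⟨v', hv'⟩, W', hW'⟩ h
      obtain ⟨rfl, rfl⟩ := insertFixed_inj hv.1 hv'.1 hW hW' (congrArg Subtype.val h)
      rfl
    · rintro ⟨F, hF⟩
      obtain ⟨v, hv, W, hW, rfl⟩ := exists_insertFixed_eq hF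
      exact ⟨⟨⟨v, hv⟩, W, hW⟩, rfl⟩

end ColoredWord

/-! ### Words of coloured permutations -/

/-- The partition with successive differences `b`: its `i`-th part, counted from `0`, is
`b i + b (i + 1) + ⋯ + b (n - 1)`. -/
def tailSum {n : ℕ} (b : Fin n → ℕ) (i : ℕ) : ℕ :=
  ∑ j ∈ {j : Fin n | i ≤ (j : ℕ)}, b j

section tailSum

variable {n : ℕ}

lemma tailSum_eq_add (b : Fin n → ℕ) (i : Fin n) : tailSum b i = b i + tailSum b (i + 1) := by
  have hinsert : ({j : Fin n | (i : ℕ) ≤ j} : Finset _) =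
      insert i ({j : Fin n | (i : ℕ) + 1 ≤ j} : Finset _) := by
    ext j
    simp only [mem_filter, mem_univ, true_and, mem_insert, Fin.ext_iff]
    omega
  rw [tailSum, hinsert, sum_insert (by simp), tailSum]

lemma tailSum_of_le (b : Fin n → ℕ) {i : ℕ} (hi : n ≤ i) : tailSum b i = 0 :=
  sum_eq_zero fun j hj => absurd (mem_filter.mp hj).2 (hi.trans_lt' j.2).not_ge

lemma tailSum_injective {b c : Fin n → ℕ} (h : ∀ i : Fin n, tailSum b i = tailSum c i) :
    b = c := by
  have hnat : ∀ i : ℕ, tailSum b i = tailSum c i := fun i => by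
    rcases lt_or_ge i n with hi | hi
    · exact h ⟨i, hi⟩
    · rw [tailSum_of_le b hi, tailSum_of_le c hi]
  funext i
  have hb := tailSum_eq_add b i
  rw [hnat, hnat, tailSum_eq_add c i] at hb
  omega

lemma exists_tailSum_eq {f : Fin n → ℕ} (hf : Antitone f) :
    ∃ b : Fin n → ℕ, ∀ i : Fin n, tailSum b i = f i := by
  let g : ℕ → ℕ := fun i => if h : i < n then f ⟨i, h⟩ else 0
  have hg : ∀ i, g (i + 1) ≤ g i := fun i => by
    by_cases hi : i + 1 < n
    · simpa [g, hi, i.lt_succ_self.trans hi] using hf (Fin.mk_le_mk.mpr i.le_succ)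
    · simp [g, hi]
  refine ⟨fun i => g i - g (i + 1), fun i => ?_⟩
  suffices ∀ m ≤ n, tailSum (fun i : Fin n => g i - g (i + 1)) m = g m by
    simpa [g] using this i i.2.le
  intro m hm
  induction hm using Nat.decreasingInduction with
  | self => simp [tailSum_of_le, g]
  | of_succ m hm ih =>
    rw [tailSum_eq_add _ ⟨m, hm⟩, ih]
    exact Nat.sub_add_cancel (hg m)

lemma sum_tailSum (b : Fin n → ℕ) :
    ∑ i : Fin n, tailSum b i = ∑ j : Fin n, ((j : ℕ) + 1) * b j := by
  simp only [tailSum, sum_filter]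
  rw [sum_comm]
  refine sum_congr rfl fun j _ => ?_
  rw [← sum_filter, sum_const, smul_eq_mul, ← Fin.card_Iic]
  congr 2
  ext i
  simp

end tailSum

namespace CP

open ColoredWord

variable {ℓ n : ℕ}

/-- The indicator function of the descents of `σ`. -/
def desInd (σ : CP ℓ n) (i : Fin n) : ℕ := if (i : ℕ) ∈ desSet σ then 1 else 0

lemma lt_of_mem_desSet {σ : CP ℓ n} {i : ℕ} (hi : i ∈ desSet σ) : i + 1 < n := by
  rw [desSet, mem_filter, mem_range] at hi
  omega

lemma castSucc_mem_desSet_iff (σ : CP ℓ (n + 1)) (i : Fin n) :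
    (i.castSucc : ℕ) ∈ desSet σ ↔ σ.2 i.castSucc < σ.2 i.succ ∨
      σ.2 i.castSucc = σ.2 i.succ ∧ σ.1 i.succ < σ.1 i.castSucc := by
  simp only [desSet, mem_filter, mem_range, letter, gtLetter, Fin.val_castSucc,
    Nat.add_sub_cancel, i.2, true_and, i.2.trans n.lt_succ_self, Nat.succ_lt_succ i.2, dif_pos,
    Fin.lt_def, Fin.ext_iff]
  rfl

lemma sum_desInd (σ : CP ℓ n) : ∑ j : Fin n, ((j : ℕ) + 1) * desInd σ j = maj σ := by
  simp only [desInd, mul_ite, mul_one, mul_zero]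
  rw [Fin.sum_univ_eq_sum_range fun j => if j ∈ desSet σ then j + 1 else 0, ← sum_filter,
    filter_mem_eq_inter, inter_eq_right.mpr fun j hj => mem_range.mpr ?_, maj]
  exact Nat.lt_of_succ_lt (lt_of_mem_desSet hj)

/-- The word with letter `ℓ * f i + c i` at the position `σ i`, where `c i` is the colour of `σ`
at `i` and `f` is the partition with successive differences `b`. -/
def toWord (σ : CP ℓ n) (b : Fin n → ℕ) (v : Fin n) : ℕ :=
  ℓ * tailSum b (σ.1.symm v) + σ.2 (σ.1.symm v)

lemma toWord_apply (σ : CP ℓ n) (b : Fin n → ℕ) (i : Fin n) :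
    toWord σ b (σ.1 i) = ℓ * tailSum b i + σ.2 i := by
  simp [toWord]

lemma sum_toWord (σ : CP ℓ n) (b : Fin n → ℕ) :
    ∑ v, toWord σ b v = ℓ * (∑ j : Fin n, ((j : ℕ) + 1) * b j) + col σ := by
  rw [← Equiv.sum_comp σ.1]
  simp only [toWord_apply, sum_add_distrib, ← mul_sum, sum_tailSum, col]

lemma sortKey_toWord_castSucc_lt_iff (σ : CP ℓ (n + 1)) (b : Fin (n + 1) → ℕ) (i : Fin n) :
    sortKey (toWord σ b) (σ.1 i.castSucc) < sortKey (toWord σ b) (σ.1 i.succ) ↔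
      desInd σ i.castSucc ≤ b i.castSucc := by
  have hdes := castSucc_mem_desSet_iff σ i
  have hne : σ.1 i.castSucc ≠ σ.1 i.succ := σ.1.injective.ne i.castSucc_lt_succ.ne
  have hcolor := (σ.2 i.succ).2
  rw [show sortKey (toWord σ b) (σ.1 i.succ) = toLex (_, _) from rfl, sortKey_lt_iff,
    toWord_apply, toWord_apply, tailSum_eq_add b i.castSucc, Fin.val_castSucc,
    ← Fin.val_succ, mul_add]
  rw [Fin.val_castSucc] at hdes
  rw [desInd, Fin.val_castSucc, if_congr hdes rfl rfl]
  rcases Nat.eq_zero_or_pos (b i.castSucc) with hb | hb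
  · rw [hb]
    split_ifs <;> omega
  · have := Nat.le_mul_of_pos_right ℓ hb
    split_ifs <;> omega

lemma strictMono_sortKey_toWord_iff {σ : CP ℓ n} {b : Fin n → ℕ} :
    StrictMono (sortKey (toWord σ b) ∘ σ.1) ↔ desInd σ ≤ b := by
  cases n with
  | zero => exact iff_of_true (fun i => i.elim0) fun i => i.elim0
  | succ n =>
    have hlast : desInd σ (Fin.last n) = 0 := if_neg fun h => (lt_of_mem_desSet h).false
    rw [Fin.strictMono_iff_lt_succ, Pi.le_def, Fin.forall_fin_succ', hlast]
    simpa using forall_congr' (sortKey_toWord_castSucc_lt_iff σ b)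

lemma sortIndex_toWord {σ : CP ℓ n} {b : Fin n → ℕ} (hb : desInd σ ≤ b) (i : Fin n) :
    sortIndex (toWord σ b) (σ.1 i) = i :=
  sortIndex_apply_of_strictMono (strictMono_sortKey_toWord_iff.mpr hb) i

lemma fixedPoints_toWord {σ : CP ℓ n} {b : Fin n → ℕ} (hb : desInd σ ≤ b) :
    fixedPoints (ℓ ∣ ·) (toWord σ b) = fixSet σ := by
  ext p
  obtain ⟨i, rfl⟩ := σ.1.surjective p
  rw [mem_fixedPoints, sortIndex_toWord hb, toWord_apply, Nat.dvd_add_right (dvd_mul_right _ _),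
    Nat.dvd_iff_mod_eq_zero, Nat.mod_eq_of_lt (σ.2 i).2, Fin.val_inj, fixSet]
  simp only [mem_filter, mem_univ, true_and, EmbeddingLike.apply_eq_iff_eq]
  exact ⟨fun h => ⟨h.1.symm, h.1 ▸ h.2⟩, fun h => ⟨h.1.symm, h.1 ▸ h.2⟩⟩

lemma toWord_inj {σ τ : CP ℓ n} {b c : Fin n → ℕ} (hb : desInd σ ≤ b) (hc : desInd τ ≤ c)
    (h : toWord σ b = toWord τ c) : σ = τ ∧ b = c := by
  have hperm : σ.1 = τ.1 := by
    ext i : 1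
    apply sortIndex_injective (toWord σ b)
    rw [sortIndex_toWord hb, h, sortIndex_toWord hc]
  have hletter : ∀ i : Fin n, ℓ * tailSum b i + σ.2 i = ℓ * tailSum c i + τ.2 i := fun i => by
    rw [← toWord_apply, ← toWord_apply, h, hperm]
  have hcolor : ∀ i, σ.2 i = τ.2 i := fun i => by
    have := congrArg (· % ℓ) (hletter i)
    simpa [Nat.mod_eq_of_lt, Fin.val_inj] using this
  refine ⟨Prod.ext hperm (funext hcolor), tailSum_injective fun i => ?_⟩
  have := hletter i
  rw [hcolor i] at this
  exact Nat.eq_of_mul_eq_mul_left (σ.2 i).pos (Nat.add_right_cancel this)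

lemma exists_toWord_eq [NeZero ℓ] (F : Fin n → ℕ) :
    ∃ (σ : CP ℓ n) (b : Fin n → ℕ), desInd σ ≤ b ∧ toWord σ b = F := by
  obtain ⟨s, hs⟩ := exists_strictMono_sortKey F
  have hanti : Antitone (F ∘ s) := fun i j hij =>
    OrderDual.toDual_le_toDual.mp (Prod.Lex.monotone_fst _ _ (hs.monotone hij))
  obtain ⟨b, hb⟩ := exists_tailSum_eq
    (f := fun i => F (s i) / ℓ) fun i j hij => Nat.div_le_div_right (hanti hij)
  have hword : toWord (s, fun i => Fin.ofNat ℓ (F (s i))) b = F := by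
    funext v
    obtain ⟨i, rfl⟩ := s.surjective v
    exact (toWord_apply _ b i).trans <| by rw [hb]; exact Nat.div_add_mod _ _
  exact ⟨_, b, strictMono_sortKey_toWord_iff.mp (by rwa [hword]), hword⟩

/-- Words are coloured permutations together with a sequence of gaps `a`, which are added to the
least differences allowed by the descents. -/
noncomputable def wordEquiv (ℓ n : ℕ) [NeZero ℓ] : CP ℓ n × (Fin n → ℕ) ≃ (Fin n → ℕ) :=
  Equiv.ofBijective (fun x => toWord x.1 (x.2 + desInd x.1)) <| by
    constructor
    · rintro ⟨σ, a⟩ ⟨τ, a'⟩ h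
      obtain ⟨rfl, ha⟩ := toWord_inj le_add_self le_add_self h
      exact congrArg (Prod.mk σ) (add_right_cancel ha)
    · intro F
      obtain ⟨σ, b, hb, hF⟩ := exists_toWord_eq (ℓ := ℓ) F
      exact ⟨(σ, b - desInd σ), (congrArg (toWord σ) (tsub_add_cancel_of_le hb)).trans hF⟩

lemma fixedPoints_wordEquiv [NeZero ℓ] (σ : CP ℓ n) (a : Fin n → ℕ) :
    fixedPoints (ℓ ∣ ·) (wordEquiv ℓ n (σ, a)) = fixSet σ :=
  fixedPoints_toWord le_add_self

lemma sum_wordEquiv [NeZero ℓ] (σ : CP ℓ n) (a : Fin n → ℕ) :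
    ∑ v, wordEquiv ℓ n (σ, a) v = fmaj σ + ∑ j : Fin n, ℓ * ((j + 1) * a j) := by
  refine (sum_toWord σ _).trans ?_
  simp only [Pi.add_apply, mul_add _ (a _), sum_add_distrib, sum_desInd, ← mul_sum, fmaj]
  ring

end CP

/-! ### Generating functions of words -/

section wordGF

open ColoredWord
open scoped ENNReal

lemma tsum_pi_geometric : ∀ {n : ℕ} (c : Fin n → ℝ≥0∞),
    ∑' a : Fin n → ℕ, ∏ j, c j ^ a j = ∏ j, (1 - c j)⁻¹
  | 0, c => by rw [tsum_eq_single 0 fun a ha => absurd (Subsingleton.elim a 0) ha]; simp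
  | n + 1, c => by
    rw [← (Fin.consEquiv fun _ : Fin (n + 1) => ℕ).tsum_eq, ENNReal.tsum_prod']
    simp only [Fin.consEquiv_apply, Fin.prod_univ_succ, Fin.cons_zero, Fin.cons_succ,
      ENNReal.tsum_mul_left, ENNReal.tsum_mul_right, ENNReal.tsum_geometric,
      tsum_pi_geometric fun j : Fin n => c j.succ]

lemma tsum_pow_sum (n : ℕ) (q : ℝ≥0∞) :
    ∑' F : Fin n → ℕ, q ^ (∑ i, F i) = ((1 - q)⁻¹) ^ n := by
  simpa [prod_pow_eq_pow_sum] using tsum_pi_geometric fun _ : Fin n => q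

/-- The generating function `1 / ((1 - Q) ⋯ (1 - Q ^ n))` of partitions into parts that are at most
`n` or, equivalently, into at most `n` parts. -/
noncomputable def partitionGF (Q : ℝ≥0∞) (n : ℕ) : ℝ≥0∞ := ∏ i ∈ range n, (1 - Q ^ (i + 1))⁻¹

lemma partitionGF_succ (Q : ℝ≥0∞) (n : ℕ) :
    partitionGF Q (n + 1) = partitionGF Q n * (1 - Q ^ (n + 1))⁻¹ :=
  prod_range_succ _ _

lemma tsum_pow_sum_mul (n ℓ : ℕ) (q : ℝ≥0∞) :
    ∑' a : Fin n → ℕ, q ^ (∑ j : Fin n, ℓ * ((j + 1) * a j)) = partitionGF (q ^ ℓ) n := by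
  rw [partitionGF, ← Fin.prod_univ_eq_prod_range fun i => (1 - (q ^ ℓ) ^ (i + 1))⁻¹,
    ← tsum_pi_geometric]
  simp only [← prod_pow_eq_pow_sum, pow_mul]

/-- The generating function, by sum of letters, of `wordsWithFixed P n k m`. -/
noncomputable def wordGF (P : ℕ → Prop) [DecidablePred P] (n k m : ℕ) (q : ℝ≥0∞) : ℝ≥0∞ :=
  ∑' F : wordsWithFixed P n k m, q ^ (∑ i, F.1 i)

lemma wordGF_zero (P : ℕ → Prop) [DecidablePred P] (n m : ℕ) (q : ℝ≥0∞) :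
    wordGF P n 0 m q = wordGF P n 0 0 q := by
  have hset : wordsWithFixed P n 0 m = wordsWithFixed P n 0 0 := by
    ext F
    refine and_congr_right fun h => ?_
    simp [card_eq_zero.mp h]
  rw [wordGF, hset, wordGF]

lemma wordGF_succ (P : ℕ → Prop) [DecidablePred P] (n k m : ℕ) (q : ℝ≥0∞) :
    wordGF P (n + 1) (k + 1) m q = ∑' v : {v // P v ∧ m ≤ v}, q ^ v.1 * wordGF P n k v q := by
  rw [wordGF, ← (insertFixedEquiv P n k m).tsum_eq, ENNReal.tsum_sigma']
  refine tsum_congr fun v => ?_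
  rw [wordGF, ← ENNReal.tsum_mul_left]
  refine tsum_congr fun W => ?_
  rw [← pow_add, ← sum_insertFixed]
  rfl

variable {ℓ : ℕ} [NeZero ℓ]

/-- Enumeration of the multiples of `ℓ` that are at least `ℓ * M`. -/
def multiplesEquiv (ℓ M : ℕ) [NeZero ℓ] : ℕ ≃ {v // ℓ ∣ v ∧ ℓ * M ≤ v} where
  toFun u := ⟨ℓ * (M + u), dvd_mul_right _ _, Nat.mul_le_mul_left _ (Nat.le_add_right _ _)⟩
  invFun v := v.1 / ℓ - M
  left_inv u := by simp [Nat.mul_div_cancel_left _ (NeZero.pos ℓ)]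
  right_inv := by
    rintro ⟨_, ⟨w, rfl⟩, hw⟩
    have hMw : M ≤ w := Nat.le_of_mul_le_mul_left hw (NeZero.pos ℓ)
    simp [Nat.mul_div_cancel_left _ (NeZero.pos ℓ), hMw]

/-- The letters of the fixed points form a partition into `k` parts, independent of the word
without fixed points that remains when they are deleted. -/
lemma wordGF_add (n k M : ℕ) (q : ℝ≥0∞) :
    wordGF (ℓ ∣ ·) (n + k) k (ℓ * M) q =
      (q ^ ℓ) ^ (M * k) * (wordGF (ℓ ∣ ·) n 0 0 q * partitionGF (q ^ ℓ) k) := by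
  induction k generalizing M with
  | zero => simp [wordGF_zero _ _ (ℓ * M), partitionGF]
  | succ k ih =>
    have hterm : ∀ u, q ^ (ℓ * (M + u)) * wordGF (ℓ ∣ ·) (n + k) k (ℓ * (M + u)) q =
        ((q ^ ℓ) ^ (M * (k + 1)) * (wordGF (ℓ ∣ ·) n 0 0 q * partitionGF (q ^ ℓ) k)) *
          ((q ^ ℓ) ^ (k + 1)) ^ u := fun u => by
      rw [ih]
      ring
    rw [← add_assoc, wordGF_succ, ← (multiplesEquiv ℓ M).tsum_eq]
    simp only [multiplesEquiv, Equiv.coe_fn_mk, hterm, ENNReal.tsum_mul_left,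
      ENNReal.tsum_geometric, partitionGF_succ]
    ring

namespace CP

variable {n : ℕ}

lemma tsum_words (w : Finset (Fin n) → ℝ≥0∞) (q : ℝ≥0∞) :
    ∑' F : Fin n → ℕ, w (fixedPoints (ℓ ∣ ·) F) * q ^ (∑ i, F i) =
      (∑ σ : CP ℓ n, w (fixSet σ) * q ^ fmaj σ) * partitionGF (q ^ ℓ) n := by
  rw [← (wordEquiv ℓ n).tsum_eq, ENNReal.tsum_prod', tsum_fintype, sum_mul]
  simp only [fixedPoints_wordEquiv, sum_wordEquiv, pow_add, ← mul_assoc (w _),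
    ENNReal.tsum_mul_left, tsum_pow_sum_mul]

/-- The generating function of `fmaj` over the coloured permutations with exactly `k` fixed
points. -/
def fixGF {R : Type*} [CommSemiring R] (ℓ n k : ℕ) (q : R) : R :=
  ∑ σ : CP ℓ n with fix σ = k, q ^ fmaj σ

lemma wordGF_eq_fixGF (n k : ℕ) (q : ℝ≥0∞) :
    wordGF (ℓ ∣ ·) n k 0 q = fixGF ℓ n k q * partitionGF (q ^ ℓ) n := by
  have h := tsum_words (ℓ := ℓ) (fun S : Finset (Fin n) => if #S = k then 1 else 0) q
  simp only [ite_mul, one_mul, zero_mul, ← sum_filter] at h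
  rw [fixGF, wordGF, tsum_subtype (wordsWithFixed _ n k 0) fun F : Fin n → ℕ => q ^ (∑ i, F i)]
  refine Eq.trans (tsum_congr fun F => ?_) h
  simp [wordsWithFixed, Set.indicator_apply]

lemma fixGF_mul_partitionGF (m k : ℕ) (q : ℝ≥0∞) :
    fixGF ℓ (m + k) k q * partitionGF (q ^ ℓ) (m + k) =
      fixGF ℓ m 0 q * partitionGF (q ^ ℓ) m * partitionGF (q ^ ℓ) k := by
  rw [← wordGF_eq_fixGF, ← wordGF_eq_fixGF]
  simpa using wordGF_add (ℓ := ℓ) m k 0 q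

lemma sum_pow_fmaj_mul_partitionGF (n : ℕ) (q : ℝ≥0∞) :
    (∑ σ : CP ℓ n, q ^ fmaj σ) * partitionGF (q ^ ℓ) n = ((1 - q)⁻¹) ^ n := by
  simpa [tsum_pow_sum] using (tsum_words (ℓ := ℓ) (n := n) (fun _ => 1) q).symm

end CP

end wordGF

/-! ### q-series -/

section qSeries

/-- The q-Pochhammer symbol `(Q; Q)_n = (1 - Q) ⋯ (1 - Q ^ n)`. -/
def qPochhammer {R : Type*} [CommRing R] (Q : R) (n : ℕ) : R := ∏ i ∈ range n, (1 - Q ^ (i + 1))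

/-- The q-analogue `(x - 1) (x - Q) ⋯ (x - Q ^ (k - 1))` of the power `(x - 1) ^ k`. -/
def qSubOnePow {R : Type*} [CommRing R] (Q x : R) (k : ℕ) : R := ∏ i ∈ range k, (x - Q ^ i)

section CommRing

variable {R : Type*} [CommRing R]

lemma qPochhammer_zero (Q : R) : qPochhammer Q 0 = 1 := prod_range_zero _

lemma qPochhammer_succ (Q : R) (n : ℕ) :
    qPochhammer Q (n + 1) = qPochhammer Q n * (1 - Q ^ (n + 1)) :=
  prod_range_succ _ _

lemma qSubOnePow_succ (Q x : R) (k : ℕ) :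
    qSubOnePow Q x (k + 1) = qSubOnePow Q x k * (x - Q ^ k) :=
  prod_range_succ _ _

lemma prod_qint_mul (q : R) (ℓ k m : ℕ) :
    (∏ j ∈ Icc (k + 1) (k + m), qint q (j * ℓ)) * (1 - q) ^ m * qPochhammer (q ^ ℓ) k =
      qPochhammer (q ^ ℓ) (k + m) := by
  induction m with
  | zero => simp
  | succ m ih =>
    have hgeom : qint q ((k + m + 1) * ℓ) * (1 - q) = 1 - (q ^ ℓ) ^ (k + m + 1) := by
      rw [qint, geom_sum_mul_neg, mul_comm _ ℓ, pow_mul]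
    rw [← add_assoc, prod_Icc_succ_top (by omega), qPochhammer_succ, ← ih, ← hgeom]
    ring

lemma esymm_cons (a : R) (s : Multiset R) (k : ℕ) :
    (a ::ₘ s).esymm (k + 1) = s.esymm (k + 1) + a * s.esymm k := by
  simp [Multiset.esymm, Multiset.powersetCard_cons, Multiset.sum_map_mul_left]

lemma esymm_map_pow_range_mul (Q : R) (k m : ℕ) :
    ((Multiset.range (m + k)).map (Q ^ ·)).esymm k * (qPochhammer Q k * qPochhammer Q m) =
      Q ^ k.choose 2 * qPochhammer Q (m + k) := by
  induction k generalizing m with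
  | zero => simp [Multiset.esymm, qPochhammer_zero]
  | succ k ihk =>
    have hchoose : (k + 1).choose 2 = k + k.choose 2 := by
      rw [Nat.choose_succ_succ' k 1, Nat.choose_one_right]
    rw [← add_assoc, Multiset.range_succ, Multiset.map_cons, esymm_cons, hchoose]
    induction m with
    | zero =>
      have hk := ihk 0
      have hnone : ((Multiset.range k).map (Q ^ ·)).esymm (k + 1) = 0 := by
        rw [Multiset.esymm, Multiset.powersetCard_eq_empty _ (by simp)]
        simp
      rw [zero_add, qPochhammer_zero] at hk ⊢
      rw [hnone, qPochhammer_succ]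
      linear_combination Q ^ k * (1 - Q ^ (k + 1)) * hk
    | succ m ihm =>
      have hk := ihk (m + 1)
      rw [← esymm_cons, ← Multiset.map_cons, ← Multiset.range_succ] at ihm
      rw [Nat.add_right_comm m 1 k] at hk ⊢
      rw [qPochhammer_succ Q k, qPochhammer_succ Q (m + k)] at ihm
      rw [qPochhammer_succ Q m, qPochhammer_succ Q (m + k)] at hk
      rw [qPochhammer_succ Q k, qPochhammer_succ Q m, qPochhammer_succ Q (m + k + 1),
        qPochhammer_succ Q (m + k)]
      linear_combination (1 - Q ^ (m + 1)) * ihm + Q ^ (m + k + 1) * (1 - Q ^ (k + 1)) * hk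

lemma sum_powersetCard_pow_mul (Q : R) (k m : ℕ) :
    (∑ S ∈ powersetCard k (univ : Finset (Fin (m + k))), Q ^ (∑ i ∈ S, (i : ℕ))) *
      (qPochhammer Q k * qPochhammer Q m) = Q ^ k.choose 2 * qPochhammer Q (m + k) := by
  have hrange : (univ : Finset (Fin (m + k))).val.map (fun i : Fin (m + k) => Q ^ (i : ℕ)) =
      (Multiset.range (m + k)).map (Q ^ ·) := by
    rw [← range_val, ← Nat.Iio_eq_range, ← Fin.map_valEmbedding_univ, map_val, Multiset.map_map]
    rfl
  simp only [← prod_pow_eq_pow_sum]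
  rw [← esymm_map_pow_range_mul, ← hrange, esymm_map_val]

end CommRing

section OrderedRing

variable {R : Type*} [CommRing R] [PartialOrder R] [IsStrictOrderedRing R] {q : R}

lemma pow_mem_Ico (hq : q ∈ Set.Ico 0 1) {n : ℕ} (hn : n ≠ 0) : q ^ n ∈ Set.Ico 0 1 :=
  ⟨pow_nonneg hq.1 n, pow_lt_one₀ hq.1 hq.2 hn⟩

lemma qPochhammer_pos (hq : q ∈ Set.Ico 0 1) (n : ℕ) : 0 < qPochhammer q n :=
  prod_pos fun i _ => sub_pos.mpr (pow_mem_Ico hq i.succ_ne_zero).2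

end OrderedRing

section Field

variable {K : Type*} [Field K] {Q : K}

lemma qBinomial_theorem (hQ : ∀ n, qPochhammer Q n ≠ 0) (x : K) (n : ℕ) :
    ∑ p ∈ antidiagonal n, qSubOnePow Q x p.1 / qPochhammer Q p.1 * (1 / qPochhammer Q p.2) =
      x ^ n / qPochhammer Q n := by
  have hfactor : ∀ n, 1 - Q ^ (n + 1) ≠ 0 := fun n =>
    right_ne_zero_of_mul (qPochhammer_succ Q n ▸ hQ (n + 1))
  induction n with
  | zero => simp [qSubOnePow, qPochhammer_zero]
  | succ n ih =>
    rw [qPochhammer_succ, ← div_div, eq_div_iff (hfactor n), pow_succ' x n, mul_div_assoc, ← ih]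
    -- `1 - Q ^ (j + k) = (1 - Q ^ j) + Q ^ j * (1 - Q ^ k)`, where each of the two summands
    -- lowers one of the indices `j` and `k`.
    have hsplit : ∀ p ∈ antidiagonal (n + 1),
        qSubOnePow Q x p.1 / qPochhammer Q p.1 * (1 / qPochhammer Q p.2) * (1 - Q ^ (n + 1)) =
        qSubOnePow Q x p.1 / qPochhammer Q p.1 * (1 - Q ^ p.1) * (1 / qPochhammer Q p.2) +
        Q ^ p.1 * (qSubOnePow Q x p.1 / qPochhammer Q p.1) *
          ((1 - Q ^ p.2) * (1 / qPochhammer Q p.2)) := by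
      intro p hp
      rw [← mem_antidiagonal.mp hp, pow_add]
      ring
    rw [sum_mul, sum_congr rfl hsplit, sum_add_distrib, Finset.Nat.sum_antidiagonal_succ,
      Finset.Nat.sum_antidiagonal_succ', mul_sum]
    simp only [pow_zero, sub_self, mul_zero, zero_mul, zero_add]
    rw [← sum_add_distrib]
    refine sum_congr rfl fun p _ => ?_
    have := hQ p.1
    have := hQ p.2
    have := hfactor p.1
    have := hfactor p.2
    rw [qSubOnePow_succ, qPochhammer_succ, qPochhammer_succ]
    field_simp
    ring

open PowerSeries in
/-- With `D = ∑ d m u ^ m` and `E x = ∑ x ^ k u ^ k / (Q; Q)_k`, the hypothesis is that `D * E 1`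
is the generating function of `t`, and the q-binomial theorem gives `E x / E 1`. -/
lemma sum_antidiagonal_mul_pow_div (hQ : ∀ n, qPochhammer Q n ≠ 0) {d t : ℕ → K}
    (h : ∀ n, ∑ p ∈ antidiagonal n, d p.1 * (1 / qPochhammer Q p.2) = t n) (x : K) (n : ℕ) :
    ∑ p ∈ antidiagonal n, d p.1 * (x ^ p.2 / qPochhammer Q p.2) =
      ∑ p ∈ antidiagonal n, qSubOnePow Q x p.1 / qPochhammer Q p.1 * t p.2 := by
  let E : K → PowerSeries K := fun x => mk fun k => x ^ k / qPochhammer Q k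
  let B : PowerSeries K := mk fun k => qSubOnePow Q x k / qPochhammer Q k
  have hDE : mk d * E 1 = mk t := by
    ext n
    simpa [E, coeff_mul] using h n
  have hBE : B * E 1 = E x := by
    ext n
    simpa [B, E, coeff_mul] using qBinomial_theorem hQ x n
  have hkey : mk d * E x = B * mk t := by
    rw [← hBE, ← hDE]
    ring
  simpa [B, E, coeff_mul] using congrArg (coeff n) hkey

end Field

end qSeries

/-! ### Distribution of `fmaj` and fixed points -/

section Transfer

variable {q : ℝ}

lemma toReal_partitionGF (hq : q ∈ Set.Ico 0 1) (n : ℕ) :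
    (partitionGF (ENNReal.ofReal q) n).toReal = (qPochhammer q n)⁻¹ := by
  rw [partitionGF, ENNReal.toReal_prod, qPochhammer, ← prod_inv_distrib]
  refine prod_congr rfl fun i _ => ?_
  have hle : ENNReal.ofReal q ^ (i + 1) ≤ 1 :=
    pow_le_one₀ bot_le (ENNReal.ofReal_le_one.mpr hq.2.le)
  rw [ENNReal.toReal_inv, ENNReal.toReal_sub_of_le hle ENNReal.one_ne_top, ENNReal.toReal_pow,
    ENNReal.toReal_ofReal hq.1, ENNReal.toReal_one]

lemma toReal_partitionGF_pow (hq : q ∈ Set.Ico 0 1) (ℓ n : ℕ) [NeZero ℓ] :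
    (partitionGF (ENNReal.ofReal q ^ ℓ) n).toReal = (qPochhammer (q ^ ℓ) n)⁻¹ := by
  rw [← ENNReal.ofReal_pow hq.1, toReal_partitionGF (pow_mem_Ico hq (NeZero.ne ℓ))]

lemma toReal_sum_pow {ι : Type*} (s : Finset ι) (f : ι → ℕ) (hq : 0 ≤ q) :
    (∑ i ∈ s, ENNReal.ofReal q ^ f i).toReal = ∑ i ∈ s, q ^ f i := by
  rw [ENNReal.toReal_sum fun _ _ => ENNReal.pow_ne_top ENNReal.ofReal_ne_top]
  simp only [ENNReal.toReal_pow, ENNReal.toReal_ofReal hq]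

end Transfer

namespace CP

section grouping

variable {ℓ n : ℕ}

lemma sum_mul_pow_fix {R : Type*} [CommSemiring R] (w : CP ℓ n → R) (x : R) :
    ∑ σ, w σ * x ^ fix σ =
      ∑ p ∈ antidiagonal n, (∑ σ : CP ℓ n with fix σ = p.2, w σ) * x ^ p.2 := by
  have hmaps : ∀ σ ∈ (univ : Finset (CP ℓ n)), (n - fix σ, fix σ) ∈ antidiagonal n := fun σ _ =>
    mem_antidiagonal.mpr (Nat.sub_add_cancel ((card_le_univ _).trans_eq (Fintype.card_fin n)))
  rw [← sum_fiberwise_of_maps_to hmaps]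
  refine sum_congr rfl fun p hp => ?_
  rw [sum_mul]
  refine sum_congr (filter_congr fun σ _ => ?_) fun σ hσ => by rw [(mem_filter.mp hσ).2]
  have := mem_antidiagonal.mp hp
  rw [Prod.ext_iff]
  omega

end grouping

variable {ℓ : ℕ} [NeZero ℓ] {q : ℝ}

lemma fixGF_div_qPochhammer (hq : q ∈ Set.Ico 0 1) (m k : ℕ) :
    fixGF ℓ (m + k) k q / qPochhammer (q ^ ℓ) (m + k) =
      fixGF ℓ m 0 q / qPochhammer (q ^ ℓ) m * (1 / qPochhammer (q ^ ℓ) k) := by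
  have h := congrArg ENNReal.toReal (fixGF_mul_partitionGF (ℓ := ℓ) m k (ENNReal.ofReal q))
  simpa only [ENNReal.toReal_mul, fixGF, toReal_sum_pow _ _ hq.1, toReal_partitionGF_pow hq,
    div_eq_mul_inv, one_mul] using h

lemma sum_pow_fmaj_div_qPochhammer (hq : q ∈ Set.Ico 0 1) (n : ℕ) :
    (∑ σ : CP ℓ n, q ^ fmaj σ) / qPochhammer (q ^ ℓ) n = ((1 - q)⁻¹) ^ n := by
  have h := congrArg ENNReal.toReal (sum_pow_fmaj_mul_partitionGF (ℓ := ℓ) n (ENNReal.ofReal q))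
  rwa [ENNReal.toReal_mul, toReal_sum_pow _ _ hq.1, toReal_partitionGF_pow hq, ← div_eq_mul_inv,
    ENNReal.toReal_pow, ENNReal.toReal_inv, ← ENNReal.ofReal_one, ← ENNReal.ofReal_sub 1 hq.1,
    ENNReal.toReal_ofReal (sub_nonneg.mpr hq.2.le)] at h

lemma sum_pow_fmaj_mul_pow_fix_div (hq : q ∈ Set.Ico 0 1) (x : ℝ) (n : ℕ) :
    (∑ σ : CP ℓ n, q ^ fmaj σ * x ^ fix σ) / qPochhammer (q ^ ℓ) n =
      ∑ p ∈ antidiagonal n,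
        fixGF ℓ p.1 0 q / qPochhammer (q ^ ℓ) p.1 * (x ^ p.2 / qPochhammer (q ^ ℓ) p.2) := by
  rw [sum_mul_pow_fix, sum_div]
  refine sum_congr rfl fun p hp => ?_
  obtain rfl := mem_antidiagonal.mp hp
  rw [← fixGF, mul_div_right_comm, fixGF_div_qPochhammer hq]
  ring

lemma sum_pow_fmaj_mul_pow_fix (hq : q ∈ Set.Ico 0 1) (x : ℝ) (n : ℕ) :
    ∑ σ : CP ℓ n, q ^ fmaj σ * x ^ fix σ =
      ∑ k ∈ range (n + 1), qSubOnePow (q ^ ℓ) x k * ∏ j ∈ Icc (k + 1) n, qint q (j * ℓ) := by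
  have hpoch : ∀ n, qPochhammer (q ^ ℓ) n ≠ 0 := fun n =>
    (qPochhammer_pos (pow_mem_Ico hq (NeZero.ne ℓ)) n).ne'
  have hone : ∀ n, ∑ p ∈ antidiagonal n,
      fixGF ℓ p.1 0 q / qPochhammer (q ^ ℓ) p.1 * (1 / qPochhammer (q ^ ℓ) p.2) =
        ((1 - q)⁻¹) ^ n := fun n => by
    rw [← sum_pow_fmaj_div_qPochhammer (ℓ := ℓ) hq]
    simpa only [one_pow, mul_one] using (sum_pow_fmaj_mul_pow_fix_div hq 1 n).symm
  have hmain := sum_antidiagonal_mul_pow_div (d := fun m => fixGF ℓ m 0 q / qPochhammer (q ^ ℓ) m)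
    (t := fun n => ((1 - q)⁻¹) ^ n) hpoch hone x n
  rw [← sum_pow_fmaj_mul_pow_fix_div hq, div_eq_iff (hpoch n), sum_mul] at hmain
  rw [hmain, ← Finset.Nat.sum_antidiagonal_eq_sum_range_succ
    fun k _ => qSubOnePow (q ^ ℓ) x k * ∏ j ∈ Icc (k + 1) n, qint q (j * ℓ)]
  refine sum_congr rfl fun p hp => ?_
  obtain rfl := mem_antidiagonal.mp hp
  rw [← prod_qint_mul]
  have := hpoch p.1
  have : 1 - q ≠ 0 := (sub_pos.mpr hq.2).ne'
  rw [inv_pow]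
  field_simp

end CP

/-! ### Distribution of `fmaf` and fixed points -/

lemma choose_two_le_sum (S : Finset ℕ) : (#S).choose 2 ≤ ∑ i ∈ S, i := by
  induction S using Finset.induction_on_max with
  | empty => simp
  | insert a s ha ih =>
    have hcard : #s ≤ a :=
      (card_le_card fun x hx => mem_range.mpr (ha x hx)).trans_eq (card_range a)
    have hnot : a ∉ s := fun h => (ha a h).false
    rw [sum_insert hnot, card_insert_of_notMem hnot, Nat.choose_succ_succ' _ 1,
      Nat.choose_one_right]
    exact add_le_add hcard ih

namespace CP

section Der

variable {ℓ n : ℕ}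

lemma mem_fixSet {σ : CP ℓ n} {i : Fin n} : i ∈ fixSet σ ↔ σ.1 i = i ∧ (σ.2 i : ℕ) = 0 := by
  simp [fixSet]

lemma image_compl_fixSet (σ : CP ℓ n) : (fixSet σ)ᶜ.image σ.1 = (fixSet σ)ᶜ := by
  refine eq_of_subset_of_card_le (image_subset_iff.mpr fun i hi => ?_)
    (card_image_of_injective _ σ.1.injective).ge
  rw [mem_compl, mem_fixSet] at hi ⊢
  rintro ⟨hperm, hcolor⟩
  rw [σ.1.injective hperm] at hcolor
  exact hi ⟨σ.1.injective hperm, hcolor⟩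

lemma orderEmbOfFin_Der (σ : CP ℓ n) (j : Fin (n - fix σ)) :
    (fixSet σ)ᶜ.orderEmbOfFin (card_nonfix σ) ((Der σ).1 j) =
      σ.1 ((fixSet σ)ᶜ.orderEmbOfFin (card_nonfix σ) j) := by
  have hcongr : ∀ {s t : Finset (Fin n)} (hst : s = t) (ht : #t = n - fix σ) (j),
      t.orderEmbOfFin ht j = s.orderEmbOfFin (hst ▸ ht) j := by
    rintro s _ rfl _ _
    rfl
  rw [hcongr (image_compl_fixSet σ), ← coe_orderIsoOfFin_apply]
  exact congrArg Subtype.val (OrderIso.apply_symm_apply _ _)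

end Der

section addFixed

variable {ℓ n m : ℕ} [NeZero ℓ] {S : Finset (Fin n)}

/-- The coloured permutation that fixes `S` and acts on the complement of `S` as `α` does, after
relabelling. For `α` without fixed points this inverts `Der`. -/
noncomputable def addFixed (S : Finset (Fin n)) (hm : #Sᶜ = m) (α : CP ℓ m) : CP ℓ n :=
  (α.1.extendDomain (Sᶜ.orderIsoOfFin hm).toEquiv, Function.extend (Sᶜ.orderEmbOfFin hm) α.2 0)

lemma mem_or_eq_orderEmbOfFin (hm : #Sᶜ = m) (i : Fin n) :
    i ∈ S ∨ ∃ j, Sᶜ.orderEmbOfFin hm j = i := by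
  rw [← Set.mem_range, range_orderEmbOfFin, mem_coe, mem_compl]
  exact em _

lemma orderEmbOfFin_compl_notMem (hm : #Sᶜ = m) (j : Fin m) : Sᶜ.orderEmbOfFin hm j ∉ S :=
  mem_compl.mp (orderEmbOfFin_mem _ hm j)

lemma addFixed_fst_orderEmbOfFin (hm : #Sᶜ = m) (α : CP ℓ m) (j : Fin m) :
    (addFixed S hm α).1 (Sᶜ.orderEmbOfFin hm j) = Sᶜ.orderEmbOfFin hm (α.1 j) :=
  α.1.extendDomain_apply_image (Sᶜ.orderIsoOfFin hm).toEquiv j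

lemma addFixed_snd_orderEmbOfFin (hm : #Sᶜ = m) (α : CP ℓ m) (j : Fin m) :
    (addFixed S hm α).2 (Sᶜ.orderEmbOfFin hm j) = α.2 j :=
  (Sᶜ.orderEmbOfFin hm).injective.extend_apply _ _ _

lemma addFixed_fst_of_mem (hm : #Sᶜ = m) (α : CP ℓ m) {i : Fin n} (hi : i ∈ S) :
    (addFixed S hm α).1 i = i :=
  α.1.extendDomain_apply_not_subtype _ (notMem_compl.mpr hi)

lemma addFixed_snd_of_mem (hm : #Sᶜ = m) (α : CP ℓ m) {i : Fin n} (hi : i ∈ S) :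
    (addFixed S hm α).2 i = 0 :=
  Function.extend_apply' _ _ _ fun ⟨j, hj⟩ => orderEmbOfFin_compl_notMem hm j (hj ▸ hi)

lemma addFixed_injective (hm : #Sᶜ = m) :
    Function.Injective (addFixed S hm : CP ℓ m → CP ℓ n) := fun α β h => by
  refine Prod.ext (Equiv.ext fun j => (Sᶜ.orderEmbOfFin hm).injective ?_) (funext fun j => ?_)
  · rw [← addFixed_fst_orderEmbOfFin, h, addFixed_fst_orderEmbOfFin]
  · rw [← addFixed_snd_orderEmbOfFin hm α, h, addFixed_snd_orderEmbOfFin]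

lemma addFixed_Der (σ : CP ℓ n) : addFixed (fixSet σ) (card_nonfix σ) (Der σ) = σ := by
  refine Prod.ext (Equiv.ext fun i => ?_) (funext fun i => ?_) <;>
    obtain hi | ⟨j, rfl⟩ := mem_or_eq_orderEmbOfFin (card_nonfix σ) i
  · rw [addFixed_fst_of_mem _ _ hi, (mem_fixSet.mp hi).1]
  · rw [addFixed_fst_orderEmbOfFin, orderEmbOfFin_Der]
  · rw [addFixed_snd_of_mem _ _ hi, Fin.ext_iff, (mem_fixSet.mp hi).2, Fin.val_zero]
  · exact addFixed_snd_orderEmbOfFin _ _ j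

lemma fixSet_addFixed_eq_iff (hm : #Sᶜ = m) (α : CP ℓ m) :
    fixSet (addFixed S hm α) = S ↔ fix α = 0 := by
  have hmem : ∀ j, Sᶜ.orderEmbOfFin hm j ∈ fixSet (addFixed S hm α) ↔ j ∈ fixSet α := fun j => by
    rw [mem_fixSet, mem_fixSet, addFixed_fst_orderEmbOfFin, addFixed_snd_orderEmbOfFin,
      EmbeddingLike.apply_eq_iff_eq]
  rw [fix, card_eq_zero]
  refine ⟨fun h => eq_empty_of_forall_notMem fun j hj => ?_, fun h => ext fun i => ?_⟩
  · rw [← hmem, h] at hj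
    exact orderEmbOfFin_compl_notMem hm j hj
  · obtain hi | ⟨j, rfl⟩ := mem_or_eq_orderEmbOfFin hm i
    · simp [hi, mem_fixSet, addFixed_fst_of_mem, addFixed_snd_of_mem]
    · simp [hmem, h, orderEmbOfFin_compl_notMem]

lemma col_addFixed (hm : #Sᶜ = m) (α : CP ℓ m) : col (addFixed S hm α) = col α := by
  have hzero : ∑ i ∈ S, ((addFixed S hm α).2 i : ℕ) = 0 :=
    sum_eq_zero fun i hi => by rw [addFixed_snd_of_mem hm α hi, Fin.val_zero]
  rw [col, ← sum_add_sum_compl S, hzero, zero_add, ← Sᶜ.image_orderEmbOfFin_univ hm,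
    sum_image (Sᶜ.orderEmbOfFin hm).injective.injOn]
  simp only [addFixed_snd_orderEmbOfFin, col]

lemma maj_Der_addFixed (hm : #Sᶜ = m) {α : CP ℓ m} (hα : fix α = 0) :
    maj (Der (addFixed S hm α)) = maj α := by
  have hfix := (fixSet_addFixed_eq_iff hm α).mpr hα
  generalize hσ : addFixed S hm α = σ at hfix ⊢
  subst hfix
  obtain rfl : n - fix σ = m := (card_nonfix σ).symm.trans hm
  rw [addFixed_injective hm ((addFixed_Der σ).trans hσ.symm)]

/-- With the binomial coefficient moved to the left, so that no subtraction occurs. -/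
lemma fmaf_addFixed_add (hm : #Sᶜ = m) {α : CP ℓ m} (hα : fix α = 0) :
    fmaf (addFixed S hm α) + ℓ * (#S).choose 2 = fmaj α + ℓ * ∑ i ∈ S, (i : ℕ) := by
  have hle : (#S).choose 2 ≤ ∑ i ∈ S, (i : ℕ) := by
    simpa using choose_two_le_sum (S.map Fin.valEmbedding)
  rw [fmaf, maf, maj_Der_addFixed hm hα, col_addFixed, fix, (fixSet_addFixed_eq_iff hm α).mpr hα,
    fmaj, add_right_comm, ← mul_add, add_assoc, Nat.sub_add_cancel hle]
  ring

variable {R : Type*} [CommSemiring R]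

lemma sum_pow_fmaf_of_fixSet_eq (hm : #Sᶜ = m) (q : R) :
    (q ^ ℓ) ^ (#S).choose 2 * ∑ σ : CP ℓ n with fixSet σ = S, q ^ fmaf σ =
      (q ^ ℓ) ^ (∑ i ∈ S, (i : ℕ)) * fixGF ℓ m 0 q := by
  rw [fixGF, mul_sum, mul_sum]
  symm
  refine sum_bij (fun α _ => addFixed S hm α) (fun α hα => ?_)
    (fun _ _ _ _ h => addFixed_injective hm h) (fun σ hσ => ?_) fun α hα => ?_
  · simpa [fixSet_addFixed_eq_iff] using hα
  · obtain rfl := (mem_filter.mp hσ).2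
    obtain rfl : n - fix σ = m := (card_nonfix σ).symm.trans hm
    refine ⟨Der σ, mem_filter.mpr ⟨mem_univ _, ?_⟩, addFixed_Der σ⟩
    rw [← fixSet_addFixed_eq_iff hm, addFixed_Der]
  · have hfmaf := fmaf_addFixed_add hm (mem_filter.mp hα).2
    rw [← pow_mul, ← pow_mul, ← pow_add, ← pow_add, add_comm, ← hfmaf, add_comm]

lemma sum_pow_fmaf_of_fix_eq (m k : ℕ) (q : R) :
    (q ^ ℓ) ^ k.choose 2 * ∑ σ : CP ℓ (m + k) with fix σ = k, q ^ fmaf σ =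
      (∑ S ∈ powersetCard k (univ : Finset (Fin (m + k))), (q ^ ℓ) ^ (∑ i ∈ S, (i : ℕ))) *
        fixGF ℓ m 0 q := by
  have hmaps : ∀ σ ∈ ({σ | fix σ = k} : Finset (CP ℓ (m + k))), fixSet σ ∈ powersetCard k univ :=
    fun σ hσ => mem_powersetCard.mpr ⟨subset_univ _, (mem_filter.mp hσ).2⟩
  rw [← sum_fiberwise_of_maps_to hmaps, mul_sum, sum_mul]
  refine sum_congr rfl fun S hS => ?_
  have hk := (mem_powersetCard.mp hS).2
  have hm : #Sᶜ = m := by rw [card_compl, Fintype.card_fin, hk, Nat.add_sub_cancel]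
  rw [← sum_pow_fmaf_of_fixSet_eq hm, hk, filter_filter]
  refine congrArg _ (sum_congr (filter_congr fun σ _ => ?_) fun _ _ => rfl)
  exact and_iff_right_of_imp fun h => (congrArg card h).trans hk

end addFixed

variable {ℓ : ℕ} [NeZero ℓ] {q : ℝ}

lemma sum_pow_fmaf_eq_fixGF (hq : q ∈ Set.Ioo 0 1) (m k : ℕ) :
    ∑ σ : CP ℓ (m + k) with fix σ = k, q ^ fmaf σ = fixGF ℓ (m + k) k q := by
  have hpoch : ∀ n, qPochhammer (q ^ ℓ) n ≠ 0 := fun n =>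
    (qPochhammer_pos (pow_mem_Ico (Set.Ioo_subset_Ico_self hq) (NeZero.ne ℓ)) n).ne'
  have hfmaj := fixGF_div_qPochhammer (ℓ := ℓ) (Set.Ioo_subset_Ico_self hq) m k
  rw [div_mul_div_comm, mul_one, div_eq_div_iff (hpoch _) (mul_ne_zero (hpoch m) (hpoch k))]
    at hfmaj
  refine mul_left_cancel₀ (pow_ne_zero (k.choose 2) (pow_ne_zero ℓ hq.1.ne')) <|
    mul_right_cancel₀ (mul_ne_zero (hpoch k) (hpoch m)) ?_
  rw [sum_pow_fmaf_of_fix_eq]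
  linear_combination fixGF ℓ m 0 q * sum_powersetCard_pow_mul (q ^ ℓ) k m -
    (q ^ ℓ) ^ k.choose 2 * hfmaj

lemma sum_pow_fmaf_mul_pow_fix (hq : q ∈ Set.Ioo 0 1) (x : ℝ) (n : ℕ) :
    ∑ σ : CP ℓ n, q ^ fmaf σ * x ^ fix σ =
      ∑ k ∈ range (n + 1), qSubOnePow (q ^ ℓ) x k * ∏ j ∈ Icc (k + 1) n, qint q (j * ℓ) := by
  rw [← sum_pow_fmaj_mul_pow_fix (Set.Ioo_subset_Ico_self hq), sum_mul_pow_fix, sum_mul_pow_fix]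
  refine sum_congr rfl fun p hp => ?_
  obtain rfl := mem_antidiagonal.mp hp
  rw [sum_pow_fmaf_eq_fixGF hq, fixGF]

end CP

/-! ### From real numbers to polynomials -/

open MvPolynomial in
lemma eq_of_aeval_Ioo_eq {P R : MvPolynomial (Fin 2) ℤ}
    (h : ∀ q ∈ Set.Ioo (0 : ℝ) 1, ∀ x : ℝ, aeval ![q, x] P = aeval ![q, x] R) : P = R := by
  refine map_injective (Int.castRingHom ℝ) Int.cast_injective <|
    MvPolynomial.funext_set ![Set.Ioo 0 1, Set.univ] ?_ fun v hv => ?_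
  · rw [Fin.forall_fin_two]
    exact ⟨Set.Ioo_infinite one_pos, Set.infinite_univ⟩
  · have hv' : ![v 0, v 1] = v := by
      ext i
      fin_cases i <;> rfl
    simpa [hv', eval_map, aeval_def] using h (v 0) (hv 0 trivial) (v 1)

open MvPolynomial in
lemma aeval_gPoly (ℓ n : ℕ) (q x : ℝ) : aeval ![q, x] (gPoly ℓ n) =
    ∑ k ∈ range (n + 1), qSubOnePow (q ^ ℓ) x k * ∏ j ∈ Icc (k + 1) n, qint q (j * ℓ) := by
  simp [gPoly, qSubOnePow, qint, pow_mul]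

open MvPolynomial in
/-- `Σ_{σ ∈ G_{ℓ,n}} q^{fmaj σ} x^{fix σ} = g_{ℓ,n}(q,x)
 = Σ_{σ ∈ G_{ℓ,n}} q^{fmaf σ} x^{fix σ}` as polynomials in `q`, `x`. -/
theorem generating_function_fix_fmaj_fmaf (ℓ n : ℕ) (hℓ : 1 ≤ ℓ) :
    (∑ σ : CP ℓ n,
        (X 0 : MvPolynomial (Fin 2) ℤ) ^ CP.fmaj σ * (X 1) ^ CP.fix σ) = gPoly ℓ n ∧
    (∑ σ : CP ℓ n,
        (X 0 : MvPolynomial (Fin 2) ℤ) ^ CP.fmaf σ * (X 1) ^ CP.fix σ) = gPoly ℓ n := by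
  have : NeZero ℓ := ⟨by omega⟩
  constructor <;> refine eq_of_aeval_Ioo_eq fun q hq x => ?_
  · rw [aeval_gPoly, ← CP.sum_pow_fmaj_mul_pow_fix (Set.Ioo_subset_Ico_self hq)]
    simp
  · rw [aeval_gPoly, ← CP.sum_pow_fmaf_mul_pow_fix hq]
    simp
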